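/- There exists a unique X ∈ ℚ[[d₁,d₂,d₃]] such that (1 + d₁d₃·X)² · φ(d₁+d₂) · φ(d₂+d₃) = φ(d₂) · φ(d₁+d₂+d₃). For this X, let F ∈ ℚ[[d₁,d₂,d₃]] be obtained by substituting u = d₁d₃·X and v = −d₂(d₁+d₂+d₃)·X into Ψ₀ (both substituted series have zero constant term, so the substitution is defined) and multiplying the result by X. Then Cosh(F) + d₁d₃·Sinh(F) = 1 + d₁d₃·X; in particular (Cosh(F) + d₁d₃·Sinh(F))² · φ(d₁+d₂) · φ(d₂+d₃) = φ(d₂) · φ(d₁+d₂+d₃), i.e. F solves the equation of Theorem 1. -/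

import Mathlib

noncomputable section

abbrev R3 := MvPowerSeries (Fin 3) ℚ

def d (i : Fin 3) : R3 := MvPowerSeries.X i

def mdeg {n : ℕ} (m : Fin n →₀ ℕ) : ℕ := m.sum fun _ k => k

/-- K = −d₁d₂d₃(d₁+d₂+d₃) -/
def K3 : R3 := -(d 0 * d 1 * d 2 * (d 0 + d 1 + d 2))

/-- Cosh(F) = Σ F^{2n} K^n/(2n)! (coefficientwise finite sum) -/
def Cosh (F : R3) : R3 := fun m => ∑ n ∈ Finset.range (mdeg m + 1),
  MvPowerSeries.coeff (R := ℚ) m ((((2*n).factorial : ℚ))⁻¹ • (F ^ (2*n) * K3 ^ n))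

def Sinh (F : R3) : R3 := fun m => ∑ n ∈ Finset.range (mdeg m + 1),
  MvPowerSeries.coeff (R := ℚ) m ((((2*n+1).factorial : ℚ))⁻¹ • (F ^ (2*n+1) * K3 ^ n))

/-- φ(g) = Σ g^{2n}/(4^n (2n+1)!) for g with zero constant term -/
def phi3 (g : R3) : R3 := fun m => ∑ n ∈ Finset.range (mdeg m + 1),
  MvPowerSeries.coeff (R := ℚ) m ((((4:ℚ)^n * (2*n+1).factorial)⁻¹) • g ^ (2*n))

/-- generalized binomial coefficient C(−1/2, n) = (−1)ⁿ (2n choose n)/4ⁿ -/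
def cb (n : ℕ) : ℚ := (-1)^n * (Nat.choose (2*n) n : ℚ) / 4^n

/-- Ψ₀(a,b) for a, b of positive order: the substituted double series
Σ_{p,q} C(−1/2,p) C(−1/2,q) a^p b^q (a+2)^{p+q+1} / (2(p+q+1)),
implemented as a coefficientwise finite sum. -/
def PsiSub (a b : R3) : R3 := fun m =>
  ∑ p ∈ Finset.range (mdeg m + 1), ∑ q ∈ Finset.range (mdeg m + 1),
    MvPowerSeries.coeff (R := ℚ) m ((cb p * cb q / (2*(p+q+1))) • (a ^ p * b ^ q * (a + 2) ^ (p+q+1)))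

/-- F = X·Ψ₀(d₁d₃X, −d₂(d₁+d₂+d₃)X) -/
def FofX (X : R3) : R3 := X * PsiSub (d 0 * d 2 * X) (-(d 1) * (d 0 + d 1 + d 2) * X)

/-!
Since `C(-1/2, n)` are the coefficients of `(1 + x)^(-1/2)`, the series `Ψ₀` is
`(u + 2) G(u (u + 2), v (u + 2))`, where `2 (E + 1) G = (1 + x)^(-1/2) (1 + y)^(-1/2)` for the Euler
derivation `E`. As `1 + u (u + 2) = (1 + u)²`, this gives `(E + 1) Ψ₀ = P := (1 + v (u + 2))^(-1/2)`
in the variables `u`, `v`.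

Put `c = cosh (Ψ₀ √(uv))` and `s = sinh (Ψ₀ √(uv)) / √(uv)`. Then `f = c + u s - (1 + u)` and
`g = c + v s - 1 / P` satisfy `E f = u P g` and `E g = v P f` and have zero constant term. The
derivation `E` preserves the order of such series while multiplication by `u P` raises it, so
`f = 0`. Substituting `u = d₁d₃X` and `v = -d₂(d₁ + d₂ + d₃)X`, for which `uv = X² K`, yields
`Cosh F + d₁d₃ Sinh F = 1 + d₁d₃X` for every `X`.

For the equation defining `X`, the two products of values of `φ` agree modulo `d₁` and modulo `d₃`,
so `d₁d₃` divides their difference; hence it also divides `√(quotient) - 1`. The constant term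
fixes the sign of the square root, which gives uniqueness.
-/

open MvPowerSeries

section Substitution

variable {σ τ R : Type*} [CommRing R]

theorem coeff_mul_eq_finsum {ι : Type*} {h : MvPowerSeries τ R} {t : ι → MvPowerSeries τ R}
    (ht : ∀ e, (fun i ↦ coeff e (t i)).HasFiniteSupport)
    (hh : ∀ e, coeff e h = ∑ᶠ i, coeff e (t i)) (g : MvPowerSeries τ R) (m : τ →₀ ℕ) :
    coeff m (g * h) = ∑ᶠ i, coeff m (g * t i) := by
  classical
  have hfin : ∀ p : (τ →₀ ℕ) × (τ →₀ ℕ),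
      (fun i ↦ coeff p.1 g * coeff p.2 (t i)).HasFiniteSupport := fun p ↦
    (ht p.2).subset (Function.support_subset_iff'.2 fun i hi ↦ by
      rw [Function.notMem_support.1 hi, mul_zero])
  simp only [coeff_mul, hh, mul_finsum' _ _ (ht _)]
  exact (finsum_sum_comm _ _ fun p _ ↦ hfin p).symm

theorem coeff_mul_subst {y : σ → MvPowerSeries τ R} (hy : HasSubst y) (f : MvPowerSeries σ R)
    (g : MvPowerSeries τ R) (m : τ →₀ ℕ) :
    coeff m (g * f.subst y) = ∑ᶠ d, coeff d f * coeff m (g * d.prod fun i n ↦ y i ^ n) := by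
  have := coeff_mul_eq_finsum (h := f.subst y)
    (t := fun d ↦ coeff d f • d.prod fun i n ↦ y i ^ n)
    (by simpa only [coeff_smul, smul_eq_mul] using coeff_subst_finite hy f)
    (by simpa only [coeff_smul, smul_eq_mul] using coeff_subst hy f) g m
  simpa only [mul_smul_comm, coeff_smul, smul_eq_mul] using this

theorem coeff_mul_pow_eq_zero {y : MvPowerSeries τ R} (hy : constantCoeff y = 0)
    (g : MvPowerSeries τ R) {m : τ →₀ ℕ} {n : ℕ} (h : m.degree < n) : coeff m (g * y ^ n) = 0 :=
  coeff_of_lt_order <| (Nat.cast_lt.2 h).trans_le <|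
    (le_order_pow_of_constantCoeff_eq_zero n hy).trans <| le_add_self.trans le_order_mul

theorem coeff_mul_powerSeries_subst {y : MvPowerSeries τ R} (hy : constantCoeff y = 0)
    (f : PowerSeries R) (g : MvPowerSeries τ R) (m : τ →₀ ℕ) :
    coeff m (g * f.subst y) =
      ∑ n ∈ Finset.range (m.degree + 1), PowerSeries.coeff n f * coeff m (g * y ^ n) := by
  have hs := PowerSeries.HasSubst.of_constantCoeff_zero hy
  have := coeff_mul_eq_finsum (h := f.subst y) (t := fun n ↦ PowerSeries.coeff n f • y ^ n)
    (by simpa only [coeff_smul, smul_eq_mul] using PowerSeries.coeff_subst_finite hs f)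
    (by simpa only [coeff_smul, smul_eq_mul] using PowerSeries.coeff_subst hs f) g m
  simp only [mul_smul_comm, coeff_smul] at this
  rw [this]
  refine finsum_eq_sum_of_support_subset _ (Function.support_subset_iff'.2 fun n hn ↦ ?_)
  rw [coeff_mul_pow_eq_zero hy g (by simpa using hn), mul_zero]

theorem constantCoeff_powerSeries_subst {z : MvPowerSeries τ R} (hz : constantCoeff z = 0)
    (f : PowerSeries R) :
    constantCoeff (f.subst z : MvPowerSeries τ R) = PowerSeries.constantCoeff f := by
  simpa using coeff_mul_powerSeries_subst hz f 1 0

theorem powerSeries_subst_subst {z : MvPowerSeries σ R} (hz : constantCoeff z = 0)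
    {y : σ → MvPowerSeries τ R} (hy : HasSubst y) (f : PowerSeries R) :
    (f.subst z : MvPowerSeries σ R).subst y = f.subst (z.subst y) :=
  subst_comp_subst_apply (PowerSeries.HasSubst.of_constantCoeff_zero hz).const hy f

theorem hasSubst_fin_two {a b : MvPowerSeries τ R} (ha : constantCoeff a = 0)
    (hb : constantCoeff b = 0) : HasSubst ![a, b] :=
  hasSubst_of_constantCoeff_zero (by simp [Fin.forall_fin_two, ha, hb])

theorem coeff_mul_fin_two_subst {a b : MvPowerSeries τ R} (ha : constantCoeff a = 0)
    (hb : constantCoeff b = 0) (f : MvPowerSeries (Fin 2) R) (g : MvPowerSeries τ R)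
    (m : τ →₀ ℕ) :
    coeff m (g * f.subst ![a, b]) =
      ∑ p ∈ Finset.range (m.degree + 1), ∑ q ∈ Finset.range (m.degree + 1),
        coeff (Finsupp.equivFunOnFinite.symm ![p, q]) f * coeff m (g * (a ^ p * b ^ q)) := by
  rw [coeff_mul_subst (hasSubst_fin_two ha hb), ← Finset.sum_product', ← finsum_comp_equiv
    ((finTwoArrowEquiv ℕ).symm.trans Finsupp.equivFunOnFinite.symm),
    finsum_eq_sum_of_support_subset _ (Function.support_subset_iff'.2 fun pq hpq ↦ ?_)]
  · exact Finset.sum_congr rfl fun pq _ ↦ by simp [Finsupp.prod_fintype]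
  · suffices coeff m (g * (a ^ pq.1 * b ^ pq.2)) = 0 by
      simp [Finsupp.prod_fintype, this]
    by_cases hp : m.degree < pq.1
    · rw [mul_comm (a ^ _), ← mul_assoc, coeff_mul_pow_eq_zero ha _ hp]
    · have hq : m.degree < pq.2 := by
        simp only [Finset.coe_product, Finset.coe_range, Set.mem_prod, Set.mem_Iio] at hpq
        omega
      rw [← mul_assoc, coeff_mul_pow_eq_zero hb _ hq]

end Substitution

section Euler

variable {σ τ R : Type*} [CommRing R]

/-- The Euler derivation `∑ᵢ Xᵢ ∂/∂Xᵢ`, defined coefficientwise so that `σ` may be infinite. -/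
def euler (σ R : Type*) [CommRing R] : Derivation R (MvPowerSeries σ R) (MvPowerSeries σ R) :=
  let E : MvPowerSeries σ R →ₗ[R] MvPowerSeries σ R :=
    LinearMap.pi fun m ↦ (m.degree : R) • coeff m
  Derivation.mk' E fun f g ↦ by
    classical
    have coeff_E (m : σ →₀ ℕ) (f) : coeff m (E f) = m.degree * coeff m f := rfl
    ext m
    simp only [smul_eq_mul, map_add]
    rw [mul_comm g, coeff_E, coeff_mul, coeff_mul, coeff_mul, Finset.mul_sum,
      ← Finset.sum_add_distrib]
    refine Finset.sum_congr rfl fun p hp ↦ ?_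
    rw [coeff_E, coeff_E, ← Finset.HasAntidiagonal.mem_antidiagonal.1 hp, map_add, Nat.cast_add]
    ring

theorem coeff_euler (m : σ →₀ ℕ) (f : MvPowerSeries σ R) :
    coeff m (euler σ R f) = m.degree * coeff m f := rfl

theorem constantCoeff_euler (f : MvPowerSeries σ R) : constantCoeff (euler σ R f) = 0 := by
  rw [← coeff_zero_eq_constantCoeff_apply, coeff_euler, map_zero, Nat.cast_zero, zero_mul]

theorem euler_X (i : σ) : euler σ R (X i) = X i := by
  classical
  ext m
  rw [coeff_euler, coeff_X]
  split_ifs with h <;> simp [h]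

theorem order_euler_le [CharZero R] [NoZeroDivisors R] {f : MvPowerSeries σ R}
    (hf : constantCoeff f = 0) : (euler σ R f).order ≤ f.order := by
  refine le_order fun m hm ↦ ?_
  have h := coeff_of_lt_order hm
  rw [coeff_euler, mul_eq_zero, Nat.cast_eq_zero, Finsupp.degree_eq_zero_iff] at h
  rcases h with rfl | h
  · simpa using hf
  · exact h

theorem eq_zero_of_euler_eq_mul [CharZero R] [NoZeroDivisors R] {f g A B : MvPowerSeries σ R}
    (hf : constantCoeff f = 0) (hg : constantCoeff g = 0) (hA : constantCoeff A = 0)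
    (hfg : euler σ R f = A * g) (hgf : euler σ R g = B * f) : f = 0 := by
  have hf' : 1 + g.order ≤ f.order := calc
    1 + g.order ≤ A.order + g.order := by gcongr; exact one_le_order_iff_constCoeff_eq_zero.2 hA
    _ ≤ (A * g).order := le_order_mul
    _ ≤ f.order := hfg ▸ order_euler_le hf
  have hg' : f.order ≤ g.order := calc
    f.order ≤ (B * f).order := le_add_self.trans le_order_mul
    _ ≤ g.order := hgf ▸ order_euler_le hg
  by_contra h
  obtain ⟨n, hn⟩ := ENat.ne_top_iff_exists.1 (mt order_eq_top_iff.1 h)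
  have hlt : 1 + f.order ≤ f.order := (by gcongr : 1 + f.order ≤ 1 + g.order).trans hf'
  rw [← hn] at hlt
  norm_cast at hlt
  omega

theorem mul_derivation_finsuppProd {A : Type*} [CommRing A] [Algebra R A]
    (D : Derivation R A A) {y : σ → A} {w c : A} (h : ∀ i, w * D (y i) = c * y i) (d : σ →₀ ℕ) :
    w * D (d.prod fun i n ↦ y i ^ n) = d.degree * (c * d.prod fun i n ↦ y i ^ n) := by
  induction d using Finsupp.induction_linear with
  | zero => simp
  | add d e hd he =>
    classical
    rw [Finsupp.prod_add_index' (by simp) (by simp [pow_add]), Derivation.leibniz, map_add]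
    simp only [smul_eq_mul, Nat.cast_add]
    linear_combination (e.prod fun i n ↦ y i ^ n) * hd + (d.prod fun i n ↦ y i ^ n) * he
  | single i n =>
    rcases n with _ | n
    · simp
    · rw [Finsupp.prod_single_index (by simp), Finsupp.degree_single, Derivation.leibniz_pow,
        Nat.add_sub_cancel, nsmul_eq_mul, smul_eq_mul]
      linear_combination ((n + 1 : ℕ) : A) * y i ^ n * h i

-- The factor `w` clears the denominator of the common logarithmic derivative `c / w` of the `y i`.
theorem mul_euler_subst {y : σ → MvPowerSeries τ R} (hy : HasSubst y) {w c : MvPowerSeries τ R}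
    (h : ∀ i, w * euler τ R (y i) = c * y i) (f : MvPowerSeries σ R) :
    w * euler τ R (f.subst y) = c * (euler σ R f).subst y := by
  ext m
  let t (d : σ →₀ ℕ) : MvPowerSeries τ R := d.prod fun i n ↦ y i ^ n
  have ht (e : τ →₀ ℕ) (d : σ →₀ ℕ) : coeff e (euler τ R (coeff d f • t d)) =
      e.degree * (coeff d f • coeff e (t d)) := by
    rw [coeff_euler, coeff_smul, smul_eq_mul]
  have hfin (e : τ →₀ ℕ) := coeff_subst_finite hy f e
  rw [coeff_mul_subst hy, coeff_mul_eq_finsum (t := fun d ↦ euler τ R (coeff d f • t d)) ?_ ?_ w m]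
  · refine finsum_congr fun d ↦ ?_
    rw [Derivation.map_smul, mul_smul_comm, mul_derivation_finsuppProd _ h, coeff_smul,
      coeff_euler, ← nsmul_eq_mul, map_nsmul, nsmul_eq_mul, mul_left_comm, mul_assoc]
  · intro e
    simp only [ht]
    exact (hfin e).subset (Function.support_mul_subset_right _ _)
  · intro e
    simp only [ht]
    rw [coeff_euler, coeff_subst hy, mul_finsum' _ _ (hfin e)]

theorem eq_zero_of_forall_pow_dvd {y f : MvPowerSeries τ R} (hy : constantCoeff y = 0)
    (h : ∀ n, y ^ n ∣ f) : f = 0 := by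
  ext m
  obtain ⟨g, rfl⟩ := h (m.degree + 1)
  rw [mul_comm, coeff_mul_pow_eq_zero hy g m.degree.lt_succ_self, map_zero]

-- `D` need not be assumed continuous: the defect of the chain rule at `X * g + C c` is `y` times
-- its defect at `g`, so it is divisible by every power of `y`.
theorem derivation_powerSeries_subst (D : Derivation R (MvPowerSeries τ R) (MvPowerSeries τ R))
    {y : MvPowerSeries τ R} (hy : constantCoeff y = 0) (f : PowerSeries R) :
    D (f.subst y) = (PowerSeries.derivative R f).subst y * D y := by
  have hs := PowerSeries.HasSubst.of_constantCoeff_zero hy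
  have hdvd (n : ℕ) : ∀ f : PowerSeries R,
      y ^ n ∣ D (f.subst y) - (PowerSeries.derivative R f).subst y * D y := by
    induction n with
    | zero => simp
    | succ n ih =>
      intro f
      obtain ⟨g, c, rfl⟩ : ∃ g c, f = PowerSeries.X * g + PowerSeries.C c :=
        ⟨_, _, PowerSeries.eq_X_mul_shift_add_const f⟩
      have hC : D (C c) = 0 := D.map_algebraMap c
      convert mul_dvd_mul_left y (ih g) using 1
      · ring
      · rw [PowerSeries.subst_add hs, PowerSeries.subst_mul hs, PowerSeries.subst_X hs,
          PowerSeries.subst_C, map_add, map_add, hC, Derivation.leibniz, Derivation.leibniz,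
          PowerSeries.derivative_X, PowerSeries.derivative_C, add_zero, add_zero]
        simp only [smul_eq_mul, mul_one]
        rw [PowerSeries.subst_add hs, PowerSeries.subst_mul hs, PowerSeries.subst_X hs]
        ring
  exact sub_eq_zero.1 <| eq_zero_of_forall_pow_dvd hy fun n ↦ hdvd n f

end Euler

section SquareRoots

variable {σ : Type*}

theorem eq_of_sq_eq_sq_of_constantCoeff_eq {R : Type*} [CommRing R] [CharZero R]
    [NoZeroDivisors R] {f g : MvPowerSeries σ R} (h : f ^ 2 = g ^ 2)
    (hfg : constantCoeff f = constantCoeff g) (hg : constantCoeff g ≠ 0) : f = g := by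
  refine (sq_eq_sq_iff_eq_or_eq_neg.1 h).resolve_right fun hneg ↦ hg ?_
  rwa [hneg, map_neg, neg_eq_self] at hfg

/-- The power series of `√(1 + x)`. -/
def sqrtOneAdd : PowerSeries ℚ := PowerSeries.binomialSeries ℚ (1 / 2 : ℚ)

/-- The power series of `1 / √(1 + x)`. -/
def invSqrtOneAdd : PowerSeries ℚ := PowerSeries.binomialSeries ℚ (-(1 / 2) : ℚ)

theorem constantCoeff_sqrtOneAdd : PowerSeries.constantCoeff sqrtOneAdd = 1 :=
  PowerSeries.binomialSeries_constantCoeff _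

theorem sqrtOneAdd_sq : sqrtOneAdd ^ 2 = 1 + PowerSeries.X := by
  rw [sqrtOneAdd, sq, ← PowerSeries.binomialSeries_add, add_halves]
  simpa using PowerSeries.binomialSeries_nat (R := ℚ) (A := ℚ) 1

theorem invSqrtOneAdd_mul_sqrtOneAdd : invSqrtOneAdd * sqrtOneAdd = 1 := by
  rw [invSqrtOneAdd, sqrtOneAdd, ← PowerSeries.binomialSeries_add, neg_add_cancel,
    PowerSeries.binomialSeries_zero]

theorem sqrtOneAdd_subst_sq {z : MvPowerSeries σ ℚ} (hz : constantCoeff z = 0) :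
    sqrtOneAdd.subst z ^ 2 = 1 + z := by
  have hs := PowerSeries.HasSubst.of_constantCoeff_zero hz
  rw [← PowerSeries.subst_pow hs, sqrtOneAdd_sq, PowerSeries.subst_add hs, PowerSeries.subst_X hs,
    ← map_one PowerSeries.C, PowerSeries.subst_C, map_one]

theorem invSqrtOneAdd_subst_mul {z : MvPowerSeries σ ℚ} (hz : constantCoeff z = 0) :
    invSqrtOneAdd.subst z * sqrtOneAdd.subst z = 1 := by
  have hs := PowerSeries.HasSubst.of_constantCoeff_zero hz
  rw [← PowerSeries.subst_mul hs, invSqrtOneAdd_mul_sqrtOneAdd,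
    ← map_one PowerSeries.C, PowerSeries.subst_C, map_one]

theorem cb_eq_choose (n : ℕ) : cb n = Ring.choose (-(1 / 2) : ℚ) n := by
  induction n with
  | zero => simp [cb]
  | succ n ih =>
    have hn : (n + 1 : ℚ) ≠ 0 := n.cast_add_one_ne_zero
    have hchoose := Ring.choose_smul_choose (-(1 / 2) : ℚ) n.le_succ
    have hcentral := congrArg (Nat.cast (R := ℚ)) n.succ_mul_centralBinom_succ
    simp only [Nat.centralBinom_eq_two_mul_choose] at hcentral
    push_cast at hcentral
    simp only [Nat.choose_succ_self_right, Nat.succ_eq_add_one, add_tsub_cancel_left,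
      Ring.choose_one_right, nsmul_eq_mul, ← ih, Nat.cast_add_one] at hchoose
    refine mul_left_cancel₀ hn (Eq.trans ?_ hchoose.symm)
    rw [cb, cb, mul_div_assoc', mul_left_comm, hcentral]
    ring

theorem coeff_invSqrtOneAdd (n : ℕ) : PowerSeries.coeff n invSqrtOneAdd = cb n := by
  rw [invSqrtOneAdd, PowerSeries.binomialSeries_coeff, ← cb_eq_choose, smul_eq_mul, mul_one]

end SquareRoots

section Hyperbolic

/-- The power series of `cosh √x`. -/
def coshSqrt : PowerSeries ℚ := PowerSeries.mk fun n ↦ ((2 * n).factorial : ℚ)⁻¹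

/-- The power series of `sinh √x / √x`. -/
def sinhcSqrt : PowerSeries ℚ := PowerSeries.mk fun n ↦ ((2 * n + 1).factorial : ℚ)⁻¹

theorem two_mul_derivative_coshSqrt : 2 * PowerSeries.derivative ℚ coshSqrt = sinhcSqrt := by
  ext n
  rw [two_mul, map_add, PowerSeries.coeff_derivative, coshSqrt, sinhcSqrt, PowerSeries.coeff_mk,
    PowerSeries.coeff_mk, show 2 * (n + 1) = 2 * n + 1 + 1 from rfl,
    Nat.factorial_succ (2 * n + 1)]
  push_cast
  field_simp
  ring

theorem two_mul_X_mul_derivative_sinhcSqrt_add :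
    2 * (PowerSeries.X * PowerSeries.derivative ℚ sinhcSqrt) + sinhcSqrt = coshSqrt := by
  ext n
  rw [two_mul, map_add, map_add]
  rcases n with _ | n
  · simp [coshSqrt, sinhcSqrt]
  · rw [PowerSeries.coeff_succ_X_mul, PowerSeries.coeff_derivative, coshSqrt, sinhcSqrt,
      PowerSeries.coeff_mk, PowerSeries.coeff_mk, Nat.factorial_succ (2 * (n + 1))]
    push_cast
    field_simp
    ring

variable {σ : Type*} (D : Derivation ℚ (MvPowerSeries σ ℚ) (MvPowerSeries σ ℚ))
  {k : MvPowerSeries σ ℚ} (hk : constantCoeff k = 0) (hD : D k = 2 * k) (w : MvPowerSeries σ ℚ)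

include hk hD

theorem derivation_coshSqrt_subst :
    D (coshSqrt.subst (w ^ 2 * k)) = k * (D w + w) * (w * sinhcSqrt.subst (w ^ 2 * k)) := by
  have hy : constantCoeff (w ^ 2 * k) = 0 := by simp [hk]
  have hs := PowerSeries.HasSubst.of_constantCoeff_zero hy
  have hcosh := congrArg (PowerSeries.subst (w ^ 2 * k)) two_mul_derivative_coshSqrt
  rw [two_mul, PowerSeries.subst_add hs] at hcosh
  rw [derivation_powerSeries_subst D hy, Derivation.leibniz, Derivation.leibniz_pow, hD, ← hcosh]
  simp only [smul_eq_mul, nsmul_eq_mul]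
  push_cast
  ring

theorem derivation_mul_sinhcSqrt_subst :
    D (w * sinhcSqrt.subst (w ^ 2 * k)) =
      (D w + w) * coshSqrt.subst (w ^ 2 * k) - w * sinhcSqrt.subst (w ^ 2 * k) := by
  have hy : constantCoeff (w ^ 2 * k) = 0 := by simp [hk]
  have hs := PowerSeries.HasSubst.of_constantCoeff_zero hy
  have hsinh := congrArg (PowerSeries.subst (w ^ 2 * k)) two_mul_X_mul_derivative_sinhcSqrt_add
  rw [two_mul, PowerSeries.subst_add hs, PowerSeries.subst_add hs, PowerSeries.subst_mul hs,
    PowerSeries.subst_X hs] at hsinh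
  rw [Derivation.leibniz, derivation_powerSeries_subst D hy, Derivation.leibniz,
    Derivation.leibniz_pow, hD, ← hsinh]
  simp only [smul_eq_mul, nsmul_eq_mul]
  push_cast
  ring

end Hyperbolic

section Psi

variable {σ τ : Type*}

/-- The series `∑ C(-1/2, p) C(-1/2, q) xᵖ y^q / (2 (p + q + 1))`, from which `Ψ₀` is obtained by
`x = u (u + 2)` and `y = v (u + 2)`, up to the factor `u + 2`. -/
def psiKernel : MvPowerSeries (Fin 2) ℚ :=
  fun m ↦ cb (m 0) * cb (m 1) / (2 * (m 0 + m 1 + 1))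

/-- The series `Ψ₀` in the variables `u = X 0` and `v = X 1`. -/
def psiZero : MvPowerSeries (Fin 2) ℚ :=
  (X 0 + 2) * psiKernel.subst ![X 0 * (X 0 + 2), X 1 * (X 0 + 2)]

theorem two_mul_euler_add_psiKernel :
    2 * (euler _ ℚ psiKernel + psiKernel) =
      invSqrtOneAdd.subst (X 0 : MvPowerSeries (Fin 2) ℚ) *
        invSqrtOneAdd.subst (X 1 : MvPowerSeries (Fin 2) ℚ) := by
  ext m
  rw [PowerSeries.coeff_subst_X_zero_subst_mul_X_one, two_mul, map_add, map_add, coeff_euler,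
    coeff_invSqrtOneAdd, coeff_invSqrtOneAdd, Finsupp.degree_eq_sum, Fin.sum_univ_two]
  have hm : (m 0 + m 1 + 1 : ℚ) ≠ 0 := by positivity
  have hker : coeff m psiKernel = cb (m 0) * cb (m 1) / (2 * (m 0 + m 1 + 1)) := rfl
  rw [hker]
  push_cast
  field_simp
  ring

theorem euler_X_add_two : euler _ ℚ (X 0 + 2 : MvPowerSeries (Fin 2) ℚ) = X 0 := by
  have : euler (Fin 2) ℚ 2 = 0 := (euler _ ℚ).map_natCast 2
  rw [map_add, euler_X, this, add_zero]

theorem euler_psiZero_add_psiZero :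
    euler _ ℚ psiZero + psiZero =
      invSqrtOneAdd.subst (X 1 * (X 0 + 2) : MvPowerSeries (Fin 2) ℚ) := by
  set y : Fin 2 → MvPowerSeries (Fin 2) ℚ := ![X 0 * (X 0 + 2), X 1 * (X 0 + 2)] with hy
  have hs : HasSubst y := hasSubst_fin_two (by simp) (by simp)
  have hE : (X 0 + 2) * euler _ ℚ (psiKernel.subst y) =
      2 * (X 0 + 1) * (euler _ ℚ psiKernel).subst y := by
    refine mul_euler_subst hs (fun i ↦ ?_) psiKernel
    fin_cases i <;>
      simp only [hy, Fin.zero_eta, Fin.mk_one, Matrix.cons_val_zero, Matrix.cons_val_one,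
        Derivation.leibniz, euler_X_add_two, euler_X, smul_eq_mul] <;>
      ring
  have hker : 2 * ((euler _ ℚ psiKernel).subst y + psiKernel.subst y) =
      invSqrtOneAdd.subst (y 0) * invSqrtOneAdd.subst (y 1) := by
    have := congrArg (subst y) two_mul_euler_add_psiKernel
    rwa [two_mul, subst_add hs, subst_add hs, subst_mul hs, powerSeries_subst_subst (by simp) hs,
      powerSeries_subst_subst (by simp) hs, subst_X hs, subst_X hs, ← two_mul] at this
  have hy₀ : constantCoeff (y 0) = 0 := by simp [hy]
  have hsqrt : sqrtOneAdd.subst (y 0) = 1 + X 0 := by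
    refine eq_of_sq_eq_sq_of_constantCoeff_eq ?_ ?_ (by simp)
    · rw [sqrtOneAdd_subst_sq hy₀]
      simp only [hy, Matrix.cons_val_zero]
      ring
    · simp [constantCoeff_powerSeries_subst hy₀, constantCoeff_sqrtOneAdd]
  have hx : invSqrtOneAdd.subst (y 0) * (1 + X 0) = 1 := hsqrt ▸ invSqrtOneAdd_subst_mul hy₀
  rw [psiZero, Derivation.leibniz, euler_X_add_two, smul_eq_mul, smul_eq_mul, ← hy, hE]
  change _ = invSqrtOneAdd.subst (y 1)
  linear_combination (1 + X 0) * hker + hx * invSqrtOneAdd.subst (y 1)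

theorem euler_sqrtOneAdd_subst :
    euler _ ℚ (sqrtOneAdd.subst (X 1 * (X 0 + 2))) =
      X 1 * (1 + X 0) * invSqrtOneAdd.subst (X 1 * (X 0 + 2) : MvPowerSeries (Fin 2) ℚ) := by
  have hy : constantCoeff (X 1 * (X 0 + 2) : MvPowerSeries (Fin 2) ℚ) = 0 := by simp
  have hmul := invSqrtOneAdd_subst_mul hy
  have hsq := congrArg (euler _ ℚ) (sqrtOneAdd_subst_sq hy)
  rw [Derivation.leibniz_pow, map_add, Derivation.leibniz, Derivation.map_one_eq_zero,
    euler_X_add_two, euler_X, Nat.add_one_sub_one, pow_one] at hsq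
  simp only [smul_eq_mul, nsmul_eq_mul, Nat.cast_ofNat] at hsq
  have : CharZero (MvPowerSeries (Fin 2) ℚ) := algebraRat.charZero _
  refine mul_left_cancel₀ two_ne_zero ?_
  linear_combination invSqrtOneAdd.subst (X 1 * (X 0 + 2)) * hsq -
    2 * euler _ ℚ (sqrtOneAdd.subst (X 1 * (X 0 + 2))) * hmul

theorem coshSqrt_add_mul_sinhcSqrt_of_euler {u v w P Q : MvPowerSeries σ ℚ}
    (hu : euler σ ℚ u = u) (hv : euler σ ℚ v = v) (hw : euler σ ℚ w + w = P)
    (hQ : euler σ ℚ Q = v * (1 + u) * P) (hPQ : P * Q = 1) (hQ₀ : constantCoeff Q = 1) :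
    coshSqrt.subst (w ^ 2 * (u * v)) + u * (w * sinhcSqrt.subst (w ^ 2 * (u * v))) = 1 + u := by
  have hu₀ : constantCoeff u = 0 := hu ▸ constantCoeff_euler u
  have hv₀ : constantCoeff v = 0 := hv ▸ constantCoeff_euler v
  have huv₀ : constantCoeff (u * v) = 0 := by simp [hu₀]
  have huv : euler σ ℚ (u * v) = 2 * (u * v) := by
    rw [Derivation.leibniz, hu, hv, smul_eq_mul, smul_eq_mul]
    ring
  have hc := derivation_coshSqrt_subst _ huv₀ huv w
  have hs := derivation_mul_sinhcSqrt_subst _ huv₀ huv w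
  have hc₀ : constantCoeff (coshSqrt.subst (w ^ 2 * (u * v)) : MvPowerSeries σ ℚ) = 1 := by
    rw [constantCoeff_powerSeries_subst (by simp [hu₀])]
    simp [coshSqrt]
  set c := coshSqrt.subst (w ^ 2 * (u * v))
  set s := w * sinhcSqrt.subst (w ^ 2 * (u * v))
  rw [hw] at hc hs
  have hf : euler σ ℚ (c + u * s - (1 + u)) = u * P * (c + v * s - Q) := by
    rw [map_sub, map_add, map_add, Derivation.leibniz, Derivation.map_one_eq_zero, hc, hs, hu,
      smul_eq_mul, smul_eq_mul]
    linear_combination u * hPQ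
  have hg : euler σ ℚ (c + v * s - Q) = v * P * (c + u * s - (1 + u)) := by
    rw [map_sub, map_add, Derivation.leibniz, hQ, hc, hs, hv, smul_eq_mul, smul_eq_mul]
    ring
  exact sub_eq_zero.1 <| eq_zero_of_euler_eq_mul (by simp [hc₀, hu₀]) (by simp [hc₀, hv₀, hQ₀])
    (by simp [hu₀]) hf hg

theorem coshSqrt_add_X_mul_sinhcSqrt_psiZero :
    coshSqrt.subst (psiZero ^ 2 * (X 0 * X 1)) +
      X 0 * (psiZero * sinhcSqrt.subst (psiZero ^ 2 * (X 0 * X 1))) = 1 + X 0 := by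
  have hz : constantCoeff (X 1 * (X 0 + 2) : MvPowerSeries (Fin 2) ℚ) = 0 := by simp
  exact coshSqrt_add_mul_sinhcSqrt_of_euler (euler_X 0) (euler_X 1) euler_psiZero_add_psiZero
    euler_sqrtOneAdd_subst (invSqrtOneAdd_subst_mul hz)
    ((constantCoeff_powerSeries_subst hz _).trans constantCoeff_sqrtOneAdd)

theorem coshSqrt_add_mul_sinhcSqrt_psiZero_subst {a b : MvPowerSeries τ ℚ}
    (ha : constantCoeff a = 0) (hb : constantCoeff b = 0) :
    coshSqrt.subst (psiZero.subst ![a, b] ^ 2 * (a * b)) +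
      a * (psiZero.subst ![a, b] * sinhcSqrt.subst (psiZero.subst ![a, b] ^ 2 * (a * b))) =
        1 + a := by
  have hs := hasSubst_fin_two ha hb
  have hy : constantCoeff (psiZero ^ 2 * (X 0 * X 1)) = 0 := by simp
  have h := congrArg (subst ![a, b]) coshSqrt_add_X_mul_sinhcSqrt_psiZero
  have h1 : subst ![a, b] (1 : MvPowerSeries (Fin 2) ℚ) = 1 := by
    rw [← coe_substAlgHom hs, map_one]
  simpa only [subst_add hs, subst_mul hs, subst_pow hs, subst_X hs, powerSeries_subst_subst hy hs,
    h1, Matrix.cons_val_zero, Matrix.cons_val_one] using h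

end Psi

section Divisibility

variable {σ R : Type*} [CommRing R]

theorem X_dvd_powerSeries_subst_sub_subst {i : σ} {y z : MvPowerSeries σ R}
    (hy : constantCoeff y = 0) (hz : constantCoeff z = 0) (h : X i ∣ y - z) (f : PowerSeries R) :
    X i ∣ f.subst y - f.subst z := by
  refine X_dvd_iff.2 fun m hm ↦ ?_
  rw [map_sub, sub_eq_zero, PowerSeries.coeff_subst (.of_constantCoeff_zero hy),
    PowerSeries.coeff_subst (.of_constantCoeff_zero hz)]
  refine finsum_congr fun n ↦ ?_
  rw [← sub_eq_zero, ← smul_sub, ← map_sub,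
    X_dvd_iff.1 (h.trans (sub_dvd_pow_sub_pow y z n)) m hm, smul_zero]

theorem X_mul_X_dvd_of_ne {i j : σ} (hij : i ≠ j) {f : MvPowerSeries σ R} (hi : X i ∣ f)
    (hj : X j ∣ f) : X i * X j ∣ f := by
  classical
  obtain ⟨g, rfl⟩ := hi
  refine mul_dvd_mul_left _ (X_dvd_iff.2 fun m hm ↦ ?_)
  have h := X_dvd_iff.1 hj (Finsupp.single i 1 + m) (by simp [hm, hij])
  rwa [X, coeff_add_monomial_mul, one_mul] at h

theorem exists_powerSeries_subst_eq_add_mul {y : MvPowerSeries σ R} (hy : constantCoeff y = 0)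
    (f : PowerSeries R) :
    ∃ g : MvPowerSeries σ R, f.subst y = C (PowerSeries.constantCoeff f) + y * g := by
  have hs := PowerSeries.HasSubst.of_constantCoeff_zero hy
  obtain ⟨g, hg⟩ := PowerSeries.X_dvd_iff.2
    (show PowerSeries.constantCoeff (f - PowerSeries.C (PowerSeries.constantCoeff f)) = 0 by simp)
  refine ⟨g.subst y, ?_⟩
  have := congrArg (PowerSeries.subst y) hg
  rw [PowerSeries.subst_sub hs, PowerSeries.subst_C, PowerSeries.subst_mul hs,
    PowerSeries.subst_X hs] at this
  rw [← this]
  ring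

theorem existsUnique_one_add_mul_sq_mul_eq {a A B : MvPowerSeries σ ℚ}
    (ha : constantCoeff a = 0) (ha' : a ≠ 0) (hA : constantCoeff A ≠ 0) (hdvd : a ∣ B - A) :
    ∃! x : MvPowerSeries σ ℚ, (1 + a * x) ^ 2 * A = B := by
  obtain ⟨r, hr⟩ := hdvd
  have hAinv : A * A⁻¹ = 1 := MvPowerSeries.mul_inv_cancel A hA
  have hz : constantCoeff (a * (r * A⁻¹)) = 0 := by simp [ha]
  obtain ⟨s, hs⟩ := exists_powerSeries_subst_eq_add_mul hz sqrtOneAdd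
  have hsq := sqrtOneAdd_subst_sq hz
  rw [hs, constantCoeff_sqrtOneAdd, map_one, mul_assoc] at hsq
  have hx : (1 + a * (r * A⁻¹ * s)) ^ 2 * A = B := by
    rw [hsq]
    linear_combination a * r * hAinv - hr
  refine ⟨_, hx, fun x' hx' ↦ ?_⟩
  have hA₀ : A ≠ 0 := fun h ↦ hA (by rw [h, map_zero])
  refine mul_left_cancel₀ ha' (add_left_cancel (a := 1) ?_)
  exact eq_of_sq_eq_sq_of_constantCoeff_eq (mul_right_cancel₀ hA₀ (hx'.trans hx.symm))
    (by simp [ha]) (by simp [ha])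

end Divisibility

section Solution

/-- The power series `φ(√x)`. -/
def phiSqrt : PowerSeries ℚ := PowerSeries.mk fun n ↦ ((4 : ℚ) ^ n * (2 * n + 1).factorial)⁻¹

theorem phi3_eq_subst {g : R3} (hg : constantCoeff g = 0) : phi3 g = phiSqrt.subst (g ^ 2) := by
  ext m
  rw [← one_mul (phiSqrt.subst _), coeff_mul_powerSeries_subst (by simp [hg])]
  change phi3 g m = _
  refine Finset.sum_congr rfl fun n _ ↦ ?_
  rw [coeff_smul, one_mul, ← pow_mul, phiSqrt, PowerSeries.coeff_mk]

theorem constantCoeff_phi3 {g : R3} (hg : constantCoeff g = 0) :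
    constantCoeff (phi3 g) = 1 := by
  rw [phi3_eq_subst hg, constantCoeff_powerSeries_subst (by simp [hg])]
  simp [phiSqrt]

theorem X_dvd_phi3_sub_phi3 {i : Fin 3} {g h : R3} (hg : constantCoeff g = 0)
    (hh : constantCoeff h = 0) (hd : X i ∣ g - h) : X i ∣ phi3 g - phi3 h := by
  rw [phi3_eq_subst hg, phi3_eq_subst hh]
  exact X_dvd_powerSeries_subst_sub_subst (by simp [hg]) (by simp [hh])
    (hd.trans (sub_dvd_pow_sub_pow g h 2)) phiSqrt

theorem X_mul_X_dvd_phi3_mul_phi3_sub {i j : Fin 3} (hij : i ≠ j) {g : R3}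
    (hg : constantCoeff g = 0) :
    X i * X j ∣ phi3 g * phi3 (X i + g + X j) - phi3 (X i + g) * phi3 (g + X j) := by
  have h (k : Fin 3) {p q : R3} (hp : constantCoeff p = 0) (hq : constantCoeff q = 0) :
      X k ∣ phi3 p * phi3 (X k + q) - phi3 (X k + p) * phi3 q := by
    have hpk : X k ∣ phi3 p - phi3 (X k + p) :=
      X_dvd_phi3_sub_phi3 hp (by simp [hp]) ⟨-1, by ring⟩
    have hqk : X k ∣ phi3 (X k + q) - phi3 q :=
      X_dvd_phi3_sub_phi3 (by simp [hq]) hq ⟨1, by ring⟩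
    convert (hqk.mul_left (phi3 p)).add (hpk.mul_left (phi3 q)) using 1
    ring
  refine X_mul_X_dvd_of_ne hij ?_ ?_
  · simpa only [add_assoc] using h i hg (q := g + X j) (by simp [hg])
  · rw [add_comm _ (X j), add_comm g (X j), mul_comm (phi3 (X i + g))]
    exact h j hg (by simp [hg])

theorem Cosh_eq_subst (F : R3) : Cosh F = coshSqrt.subst (F ^ 2 * K3) := by
  ext m
  rw [← one_mul (coshSqrt.subst _), coeff_mul_powerSeries_subst (by simp [K3, d])]
  change Cosh F m = _
  refine Finset.sum_congr rfl fun n _ ↦ ?_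
  rw [coeff_smul, one_mul, mul_pow, ← pow_mul, coshSqrt, PowerSeries.coeff_mk]

theorem Sinh_eq_mul_subst (F : R3) : Sinh F = F * sinhcSqrt.subst (F ^ 2 * K3) := by
  ext m
  rw [coeff_mul_powerSeries_subst (by simp [K3, d])]
  change Sinh F m = _
  refine Finset.sum_congr rfl fun n _ ↦ ?_
  rw [coeff_smul, mul_pow, ← mul_assoc, ← pow_mul, ← pow_succ', sinhcSqrt,
    PowerSeries.coeff_mk]

theorem PsiSub_eq_subst {a b : R3} (ha : constantCoeff a = 0) (hb : constantCoeff b = 0) :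
    PsiSub a b = psiZero.subst ![a, b] := by
  have hs := hasSubst_fin_two ha hb
  have hs' : HasSubst (![X 0 * (X 0 + 2), X 1 * (X 0 + 2)] : Fin 2 → MvPowerSeries (Fin 2) ℚ) :=
    hasSubst_fin_two (by simp) (by simp)
  have h2 : subst ![a, b] (2 : MvPowerSeries (Fin 2) ℚ) = 2 := by
    rw [← coe_substAlgHom hs, map_ofNat]
  have hpsi : psiZero.subst ![a, b] = (a + 2) * psiKernel.subst ![a * (a + 2), b * (a + 2)] := by
    rw [psiZero, subst_mul hs, subst_add hs, subst_X hs, h2, subst_comp_subst_apply hs' hs]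
    congr 2
    ext i : 1
    fin_cases i <;> simp [subst_mul hs, subst_add hs, subst_X hs, h2]
  ext m
  rw [hpsi, coeff_mul_fin_two_subst (by simp [ha]) (by simp [hb])]
  change PsiSub a b m = _
  refine Finset.sum_congr rfl fun p _ ↦ Finset.sum_congr rfl fun q _ ↦ ?_
  have hcoeff : coeff (Finsupp.equivFunOnFinite.symm ![p, q]) psiKernel =
      cb p * cb q / (2 * (p + q + 1)) := rfl
  rw [coeff_smul, hcoeff, mul_pow, mul_pow]
  congr 2
  ring

theorem d_ne_zero (i : Fin 3) : d i ≠ 0 := fun h ↦ by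
  simpa [d, coeff_index_single_self_X] using congrArg (coeff (Finsupp.single i 1)) h

theorem Cosh_add_Sinh_FofX (x : R3) :
    Cosh (FofX x) + d 0 * d 2 * Sinh (FofX x) = 1 + d 0 * d 2 * x := by
  have ha : constantCoeff (d 0 * d 2 * x) = 0 := by simp [d]
  have hb : constantCoeff (-(d 1) * (d 0 + d 1 + d 2) * x) = 0 := by simp [d]
  have h := coshSqrt_add_mul_sinhcSqrt_psiZero_subst ha hb
  rw [← PsiSub_eq_subst ha hb] at h
  have hK : FofX x ^ 2 * K3 = PsiSub (d 0 * d 2 * x) (-(d 1) * (d 0 + d 1 + d 2) * x) ^ 2 *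
      (d 0 * d 2 * x * (-(d 1) * (d 0 + d 1 + d 2) * x)) := by
    rw [FofX, K3]
    ring
  rw [Cosh_eq_subst, Sinh_eq_mul_subst, hK, FofX]
  linear_combination h

end Solution

theorem stmt1_general :
    (∃! X : R3, (1 + d 0 * d 2 * X) ^ 2 * phi3 (d 0 + d 1) * phi3 (d 1 + d 2)
        = phi3 (d 1) * phi3 (d 0 + d 1 + d 2)) ∧
    ∀ X : R3, Cosh (FofX X) + d 0 * d 2 * Sinh (FofX X) = 1 + d 0 * d 2 * X := by
  refine ⟨?_, Cosh_add_Sinh_FofX⟩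
  have hX (i : Fin 3) : constantCoeff (d i) = 0 := constantCoeff_X i
  have hφ : constantCoeff (phi3 (d 0 + d 1) * phi3 (d 1 + d 2)) ≠ 0 := by
    simp [constantCoeff_phi3, hX]
  have hdvd : d 0 * d 2 ∣
      phi3 (d 1) * phi3 (d 0 + d 1 + d 2) - phi3 (d 0 + d 1) * phi3 (d 1 + d 2) :=
    X_mul_X_dvd_phi3_mul_phi3_sub (by decide) (hX 1)
  simpa only [mul_assoc] using existsUnique_one_add_mul_sq_mul_eq (by simp [hX])
    (mul_ne_zero (d_ne_zero 0) (d_ne_zero 2)) hφ hdvd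

theorem stmt1 :
    (∃! X : R3, (1 + d 0 * d 2 * X)^2 * phi3 (d 0 + d 1) * phi3 (d 1 + d 2)
        = phi3 (d 1) * phi3 (d 0 + d 1 + d 2)) ∧
    (∀ X : R3, (1 + d 0 * d 2 * X)^2 * phi3 (d 0 + d 1) * phi3 (d 1 + d 2)
        = phi3 (d 1) * phi3 (d 0 + d 1 + d 2) →
      Cosh (FofX X) + d 0 * d 2 * Sinh (FofX X) = 1 + d 0 * d 2 * X ∧
      (Cosh (FofX X) + d 0 * d 2 * Sinh (FofX X))^2 * phi3 (d 0 + d 1) * phi3 (d 1 + d 2)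
        = phi3 (d 1) * phi3 (d 0 + d 1 + d 2)) :=
  ⟨stmt1_general.1, fun X hX ↦ ⟨stmt1_general.2 X, by rwa [stmt1_general.2 X]⟩⟩
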